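/- arXiv:1805.06218 — 2 statements merged into one kernel-verified Lean document; each statement's English description precedes it below -/
import Mathlib

section
/- Let Φ be a unital positive linear map from n×n to m×m complex matrices, let f : ℝ → ℝ be operator monotone on [0,∞), and let A, B be n×n complex matrices with m·I ≤ A ≤ M·I and m·I ≤ B ≤ M·I for some scalars 0 < m < M. Then (Φ(f(A)) + Φ(f(B)))/2 − Φ(f(A ! B)) ≤ ((M−m)²/(4Mm))·f(M)·I. -/
open Matrix ComplexOrder

/-- Loewner order: `A ≤ B` iff `B - A` is positive semidefinite. -/
def LoewnerLE {n : Type} [Fintype n] (A B : Matrix n n ℂ) : Prop := (B - A).PosSemidef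

/-- The positive square root of a (Hermitian) matrix, via the continuous functional calculus. -/
noncomputable def msqrt {n : Type} [Fintype n] [DecidableEq n] (A : Matrix n n ℂ) :
    Matrix n n ℂ := cfc Real.sqrt A

/-- The arithmetic mean `A ∇ B = (A + B)/2`. -/
noncomputable def amean {n : Type} [Fintype n] [DecidableEq n] (A B : Matrix n n ℂ) :
    Matrix n n ℂ := (2 : ℝ)⁻¹ • (A + B)

/-- The harmonic mean `A ! B = ((A⁻¹ + B⁻¹)/2)⁻¹`. -/
noncomputable def hmean {n : Type} [Fintype n] [DecidableEq n] (A B : Matrix n n ℂ) :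
    Matrix n n ℂ := ((2 : ℝ)⁻¹ • (A⁻¹ + B⁻¹))⁻¹

/-- The geometric mean `A ♯ B = A^(1/2) (A^(-1/2) B A^(-1/2))^(1/2) A^(1/2)`. -/
noncomputable def gmean {n : Type} [Fintype n] [DecidableEq n] (A B : Matrix n n ℂ) :
    Matrix n n ℂ := msqrt A * msqrt ((msqrt A)⁻¹ * B * (msqrt A)⁻¹) * msqrt A

/-- `f : ℝ → ℝ` is operator monotone on `[0,∞)`: it is continuous and nonnegative on `[0,∞)`
and monotone on positive-semidefinite complex matrices of every finite size, with `f` applied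
via the continuous functional calculus. -/
def OpMonotone (f : ℝ → ℝ) : Prop :=
  ContinuousOn f (Set.Ici 0) ∧ (∀ x : ℝ, 0 ≤ x → 0 ≤ f x) ∧
    ∀ (k : Type) [Fintype k] [DecidableEq k] (X Y : Matrix k k ℂ),
      X.PosSemidef → LoewnerLE X Y → LoewnerLE (cfc f X) (cfc f Y)

/-- `g : ℝ → ℝ` is operator monotone decreasing on `(0,∞)`: it is continuous and nonnegative on
`(0,∞)` and antitone on positive-definite complex matrices of every finite size, with `g` applied
via the continuous functional calculus. -/
def OpAntitone (g : ℝ → ℝ) : Prop :=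
  ContinuousOn g (Set.Ioi 0) ∧ (∀ x : ℝ, 0 < x → 0 ≤ g x) ∧
    ∀ (k : Type) [Fintype k] [DecidableEq k] (X Y : Matrix k k ℂ),
      X.PosDef → Y.PosDef → LoewnerLE X Y → LoewnerLE (cfc g Y) (cfc g X)

/-!
Let `V` be an isometry and `A ≥ 0`. The inequality `A ≤ V (V*AV) V* + r (1 - V V*)` may fail for
every `r`, but for each `c > 1` the inequality `A ≤ V (c V*AV) V* + r (1 - V V*)` holds once `r` is
large: the factor `c` absorbs the off-diagonal blocks. The right-hand
side is intertwined by `V` with `c V*AV`, and hence so are their images under `f`. Operator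
monotonicity therefore gives `V* f(A) V ≤ f(c V*AV)`, and `c → 1` yields the Hansen–Jensen
inequality `V* f(A) V ≤ f(V*AV)`.

For block diagonal matrices this says that `f` is operator concave; together with `f(0) ≥ 0` it
follows that `f(KX) ≤ K f(X)` for `K ≥ 1`. The Kantorovich inequality `A ∇ B ≤ K (A ! B)`, with
`K = (M + m)² / (4Mm)`, then bounds `f(A ! B)` below by `K⁻¹ f(A ∇ B)`, while concavity bounds
`(f(A) + f(B)) / 2` above by `f(A ∇ B)`. The difference is thus at most `(1 - K⁻¹) f(M)`, and
`1 - K⁻¹ = ((M - m) / (M + m))² ≤ (M - m)² / (4Mm)`.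
-/

open Filter Topology
open scoped MatrixOrder

section FunctionalCalculus

variable {𝕜 ι κ : Type*} [RCLike 𝕜] [Fintype ι] [DecidableEq ι] [Fintype κ] [DecidableEq κ]

lemma aeval_mul_eq_mul_aeval {X : Matrix ι ι 𝕜} {Y : Matrix κ κ 𝕜} {V : Matrix ι κ 𝕜}
    (h : X * V = V * Y) (p : Polynomial ℝ) :
    Polynomial.aeval X p * V = V * Polynomial.aeval Y p := by
  have hpow (k : ℕ) : X ^ k * V = V * Y ^ k := by
    induction k with
    | zero => simp
    | succ k ih =>
      rw [pow_succ, Matrix.mul_assoc, h, ← Matrix.mul_assoc, ih, Matrix.mul_assoc, ← pow_succ]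
  simp only [Polynomial.aeval_eq_sum_range, Matrix.sum_mul, Matrix.mul_sum, Matrix.smul_mul,
    Matrix.mul_smul, hpow]

lemma cfc_mul_eq_mul_cfc {X : Matrix ι ι 𝕜} {Y : Matrix κ κ 𝕜} {V : Matrix ι κ 𝕜}
    (hX : X.IsHermitian) (hY : Y.IsHermitian) (h : X * V = V * Y) (f : ℝ → ℝ) :
    cfc f X * V = V * cfc f Y := by
  have hfin : (spectrum ℝ X ∪ spectrum ℝ Y).Finite :=
    X.finite_real_spectrum.union Y.finite_real_spectrum
  let p := Lagrange.interpolate hfin.toFinset id f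
  have hp (x : ℝ) (hx : x ∈ spectrum ℝ X ∪ spectrum ℝ Y) : f x = p.eval x :=
    (Lagrange.eval_interpolate_at_node f (Set.injOn_id _) (hfin.mem_toFinset.2 hx)).symm
  rw [cfc_congr fun x hx ↦ hp x (.inl hx), cfc_congr fun x hx ↦ hp x (.inr hx),
    cfc_polynomial p X hX.isSelfAdjoint, cfc_polynomial p Y hY.isSelfAdjoint,
    aeval_mul_eq_mul_aeval h]

lemma cfc_fromBlocks_zero_zero {A : Matrix ι ι 𝕜} {B : Matrix κ κ 𝕜}
    (hA : A.IsHermitian) (hB : B.IsHermitian) (f : ℝ → ℝ) :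
    cfc f (fromBlocks A 0 0 B) = fromBlocks (cfc f A) 0 0 (cfc f B) := by
  have hAB : (fromBlocks A 0 0 B).IsHermitian := hA.fromBlocks conjTranspose_zero hB
  have hl := cfc_mul_eq_mul_cfc (V := fromRows 1 0) hAB hA
    (by simp [fromBlocks_mul_fromRows, fromRows_mul]) f
  have hr := cfc_mul_eq_mul_cfc (V := fromRows 0 1) hAB hB
    (by simp [fromBlocks_mul_fromRows, fromRows_mul]) f
  calc cfc f (fromBlocks A 0 0 B)
      = cfc f (fromBlocks A 0 0 B) * fromCols (fromRows 1 0) (fromRows 0 1) := by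
        rw [fromCols_fromRows_eq_fromBlocks, fromBlocks_one, mul_one]
    _ = fromBlocks (cfc f A) 0 0 (cfc f B) := by
        rw [mul_fromCols, hl, hr]
        simp [fromRows_mul, fromCols_fromRows_eq_fromBlocks]

lemma tendsto_cfc_of_forall_mem_spectrum {α : Type*} {l : Filter α} {F : α → ℝ → ℝ} {f : ℝ → ℝ}
    {A : Matrix ι ι 𝕜} (h : ∀ x ∈ spectrum ℝ A, Tendsto (F · x) l (𝓝 (f x))) :
    Tendsto (fun t ↦ cfc (F t) A) l (𝓝 (cfc f A)) := by
  have hfin := A.finite_real_spectrum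
  refine tendsto_cfc_fun (Metric.tendstoUniformlyOn_iff.2 fun ε hε ↦ ?_)
    (.of_forall fun t ↦ hfin.continuousOn (F t))
  refine (eventually_all_finite hfin).2 fun x hx ↦ ?_
  simpa only [dist_comm] using Metric.tendsto_nhds.1 (h x hx) ε hε

lemma smul_add_smul_inv_add_smul_one_nonneg {A : Matrix ι ι 𝕜} (hA : A.PosDef) {p q t : ℝ}
    (h : ∀ x ∈ spectrum ℝ A, 0 ≤ p * x + q * x⁻¹ + t) : 0 ≤ p • A + q • A⁻¹ + t • 1 := by
  have hc (g : ℝ → ℝ) : ContinuousOn g (spectrum ℝ A) := A.finite_real_spectrum.continuousOn g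
  have hcfc : cfc (fun x ↦ p * x + q * x⁻¹ + t) A = p • A + q • A⁻¹ + t • 1 := by
    obtain ⟨u, rfl⟩ := hA.isUnit
    rw [cfc_add_const t _ _ (hc _), cfc_add _ _ _ (hc _) (hc _), cfc_const_mul _ _ _ (hc _),
      cfc_const_mul _ _ _ (hc _), cfc_id' ℝ (u : Matrix ι ι 𝕜), cfc_inv_id u, coe_units_inv,
      Algebra.algebraMap_eq_smul_one]
  exact hcfc ▸ cfc_nonneg h

end FunctionalCalculus

section LoewnerOrder

variable {𝕜 ι κ : Type*} [RCLike 𝕜]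

lemma posDef_of_smul_one_le [DecidableEq ι] {A : Matrix ι ι 𝕜} {a : ℝ} (ha : 0 < a)
    (h : a • 1 ≤ A) : A.PosDef := by
  simpa using (PosDef.one.smul ha).add_posSemidef (Matrix.le_iff.1 h)

lemma conjTranspose_mul_mul_le_conjTranspose_mul_mul [Fintype ι] [Finite κ] {A B : Matrix ι ι 𝕜}
    (h : A ≤ B) (V : Matrix ι κ 𝕜) : Vᴴ * A * V ≤ Vᴴ * B * V := by
  simpa only [Matrix.le_iff, Matrix.mul_sub, Matrix.sub_mul] using
    (Matrix.le_iff.1 h).conjTranspose_mul_mul_same V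

lemma conjTranspose_mul_mul_nonneg [Fintype ι] [Finite κ] {A : Matrix ι ι 𝕜} (hA : 0 ≤ A)
    (V : Matrix ι κ 𝕜) : 0 ≤ Vᴴ * A * V :=
  (hA.posSemidef.conjTranspose_mul_mul_same V).nonneg

lemma fromBlocks_zero_zero_nonneg [Finite ι] [Finite κ] {A : Matrix ι ι 𝕜} {B : Matrix κ κ 𝕜}
    (hA : 0 ≤ A) (hB : 0 ≤ B) : 0 ≤ fromBlocks A 0 0 B := by
  classical
  cases nonempty_fintype ι
  cases nonempty_fintype κ
  let P : Matrix ι (ι ⊕ κ) 𝕜 := fromCols 1 0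
  let Q : Matrix κ (ι ⊕ κ) 𝕜 := fromCols 0 1
  have hsum : fromBlocks A 0 0 B = Pᴴ * A * P + Qᴴ * B * Q := by
    ext (_ | _) (_ | _) <;>
      simp [P, Q, conjTranspose_fromCols_eq_fromRows_conjTranspose, fromRows_mul]
  rw [hsum]
  exact add_nonneg (conjTranspose_mul_mul_nonneg hA _) (conjTranspose_mul_mul_nonneg hB _)

lemma conjTranspose_add_mul_mul_add_le [Fintype ι] [Finite κ] {A : Matrix ι ι 𝕜} (hA : 0 ≤ A)
    (P Q : Matrix ι κ 𝕜) {δ : ℝ} (hδ : 0 < δ) :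
    (P + Q)ᴴ * A * (P + Q) ≤ (1 + δ) • (Pᴴ * A * P) + (1 + δ⁻¹) • (Qᴴ * A * Q) := by
  have hsq : 0 ≤ δ⁻¹ • ((δ • P - Q)ᴴ * A * (δ • P - Q)) :=
    ((hA.posSemidef.conjTranspose_mul_mul_same _).smul (inv_nonneg.2 hδ.le)).nonneg
  have hexpand : (1 + δ) • (Pᴴ * A * P) + (1 + δ⁻¹) • (Qᴴ * A * Q) - (P + Q)ᴴ * A * (P + Q) =
      δ⁻¹ • ((δ • P - Q)ᴴ * A * (δ • P - Q)) := by
    simp only [conjTranspose_add, conjTranspose_sub, conjTranspose_smul, star_trivial,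
      Matrix.add_mul, Matrix.mul_add, Matrix.sub_mul, Matrix.mul_sub, Matrix.smul_mul,
      Matrix.mul_smul]
    match_scalars <;> field_simp <;> ring
  exact sub_nonneg.1 (hexpand ▸ hsq)

lemma add_smul_inv_le_smul_one [Fintype ι] [DecidableEq ι] {A : Matrix ι ι 𝕜} {m M : ℝ}
    (hm : 0 < m) (hmA : m • 1 ≤ A) (hAM : A ≤ M • 1) : A + (m * M) • A⁻¹ ≤ (m + M) • 1 := by
  have hA : A.PosDef := posDef_of_smul_one_le hm hmA
  have hsa : IsSelfAdjoint A := hA.isHermitian.isSelfAdjoint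
  rw [← Algebra.algebraMap_eq_smul_one] at hmA hAM
  have h := smul_add_smul_inv_add_smul_one_nonneg hA (p := -1) (q := -(m * M)) (t := m + M)
    fun x hx ↦ by
      have hmx : m ≤ x := (algebraMap_le_iff_le_spectrum hsa).1 hmA x hx
      have hxM : x ≤ M := (le_algebraMap_iff_spectrum_le hsa).1 hAM x hx
      have hx0 : 0 < x := hm.trans_le hmx
      calc 0 ≤ (x - m) * (M - x) / x :=
            div_nonneg (mul_nonneg (sub_nonneg.2 hmx) (sub_nonneg.2 hxM)) hx0.le
        _ = -1 * x + -(m * M) * x⁻¹ + (m + M) := by field_simp; ring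
  rw [← sub_nonneg]
  convert h using 1
  module

lemma smul_one_le_smul_inv_add_smul [Fintype ι] [DecidableEq ι] {A : Matrix ι ι 𝕜} {m M : ℝ}
    (hm : 0 < m) (hM : 0 < M) (hA : A.PosDef) :
    (m + M) • 1 ≤ (m * M) • A⁻¹ + ((M + m) ^ 2 / (4 * M * m)) • A := by
  have h := smul_add_smul_inv_add_smul_one_nonneg hA (p := (M + m) ^ 2 / (4 * M * m))
    (q := m * M) (t := -(m + M)) fun x hx ↦ by
      have hx0 : 0 < x := hA.isStrictlyPositive.spectrum_pos hx
      calc 0 ≤ ((M + m) * x - 2 * m * M) ^ 2 / (4 * M * m * x) := by positivity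
        _ = (M + m) ^ 2 / (4 * M * m) * x + m * M * x⁻¹ + -(m + M) := by field_simp; ring
  rw [← sub_nonneg]
  convert h using 1
  module

open scoped Matrix.Norms.L2Operator in
lemma exists_le_mul_smul_mul_add_smul_one_sub [Fintype ι] [DecidableEq ι] [Fintype κ]
    [DecidableEq κ] {A : Matrix ι ι ℂ} (hA : 0 ≤ A) {V : Matrix ι κ ℂ} (hV : Vᴴ * V = 1)
    {c : ℝ} (hc : 1 < c) : ∃ r : ℝ, A ≤ V * (c • (Vᴴ * A * V)) * Vᴴ + r • (1 - V * Vᴴ) := by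
  set Q := 1 - V * Vᴴ
  have hQ : Qᴴ * Q = Q := by
    simp only [Q, conjTranspose_sub, conjTranspose_one, conjTranspose_mul,
      conjTranspose_conjTranspose, Matrix.mul_sub, Matrix.sub_mul, Matrix.mul_assoc, mul_one,
      one_mul]
    rw [← Matrix.mul_assoc Vᴴ, hV, Matrix.one_mul, sub_self, sub_zero]
  have hc0 : 0 < c - 1 := sub_pos.2 hc
  refine ⟨(1 + (c - 1)⁻¹) * ‖A‖, ?_⟩
  calc A = (V * Vᴴ + Q)ᴴ * A * (V * Vᴴ + Q) := by simp [Q]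
    _ ≤ (1 + (c - 1)) • ((V * Vᴴ)ᴴ * A * (V * Vᴴ)) + (1 + (c - 1)⁻¹) • (Qᴴ * A * Q) :=
      conjTranspose_add_mul_mul_add_le hA _ _ hc0
    _ ≤ (1 + (c - 1)) • ((V * Vᴴ)ᴴ * A * (V * Vᴴ)) + (1 + (c - 1)⁻¹) • (‖A‖ • (Qᴴ * Q)) := by
      gcongr
      exact CStarAlgebra.star_left_conjugate_le_norm_smul (.of_nonneg hA)
    _ = V * (c • (Vᴴ * A * V)) * Vᴴ + ((1 + (c - 1)⁻¹) * ‖A‖) • Q := by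
      simp [hQ, smul_smul, Matrix.mul_assoc]

end LoewnerOrder

namespace OpMonotone

variable {f : ℝ → ℝ} {ι κ : Type} [Fintype ι] [DecidableEq ι] [Fintype κ] [DecidableEq κ]

lemma cfc_le_cfc (hf : OpMonotone f) {A B : Matrix ι ι ℂ} (hA : 0 ≤ A) (hAB : A ≤ B) :
    cfc f A ≤ cfc f B :=
  hf.2.2 ι A B hA.posSemidef hAB

lemma cfc_nonneg (hf : OpMonotone f) {A : Matrix ι ι ℂ} (hA : 0 ≤ A) : 0 ≤ cfc f A :=
  _root_.cfc_nonneg fun x hx ↦ hf.2.1 x (spectrum_nonneg_of_nonneg hA hx)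

lemma cfc_le_smul_one (hf : OpMonotone f) {A : Matrix ι ι ℂ} (hA : 0 ≤ A) {b : ℝ}
    (hAb : A ≤ b • 1) : cfc f A ≤ f b • 1 := by
  simpa only [← Algebra.algebraMap_eq_smul_one, cfc_algebraMap] using hf.cfc_le_cfc hA hAb

lemma tendsto_cfc_smul (hf : OpMonotone f) {A : Matrix ι ι ℂ} (hA : 0 ≤ A) :
    Tendsto (fun c : ℝ ↦ cfc f (c • A)) (𝓝[>] 1) (𝓝 (cfc f A)) := by
  have hcomp (c : ℝ) : cfc (fun x ↦ f (c * x)) A = cfc f (c • A) :=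
    cfc_comp_smul c f A ((A.finite_real_spectrum.image _).continuousOn f) (.of_nonneg hA)
  simp only [← hcomp]
  refine tendsto_cfc_of_forall_mem_spectrum fun x hx ↦ ?_
  have hx0 : 0 ≤ x := spectrum_nonneg_of_nonneg hA hx
  refine (hf.1 x hx0).tendsto.comp (tendsto_nhdsWithin_iff.2 ⟨?_, ?_⟩)
  · exact ((continuous_mul_const x).tendsto' 1 x (one_mul x)).mono_left nhdsWithin_le_nhds
  · filter_upwards [self_mem_nhdsWithin] with c hc
    exact mul_nonneg (zero_le_one.trans (le_of_lt hc)) hx0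

lemma conjTranspose_mul_cfc_mul_le_cfc_smul (hf : OpMonotone f) {A : Matrix ι ι ℂ} (hA : 0 ≤ A)
    {V : Matrix ι κ ℂ} (hV : Vᴴ * V = 1) {c : ℝ} (hc : 1 < c) :
    Vᴴ * cfc f A * V ≤ cfc f (c • (Vᴴ * A * V)) := by
  obtain ⟨r, hr⟩ := exists_le_mul_smul_mul_add_smul_one_sub hA hV hc
  set Y := c • (Vᴴ * A * V)
  set X := V * Y * Vᴴ + r • (1 - V * Vᴴ)
  have hX : X.IsHermitian := (hA.trans hr).posSemidef.isHermitian
  have hY : Y.IsHermitian := (isHermitian_conjTranspose_mul_mul V hA.posSemidef.isHermitian).smul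
    (.all c)
  have hXV : X * V = V * Y := by
    simp [X, Matrix.add_mul, Matrix.sub_mul, Matrix.mul_assoc, hV]
  calc Vᴴ * cfc f A * V ≤ Vᴴ * cfc f X * V :=
        conjTranspose_mul_mul_le_conjTranspose_mul_mul (hf.cfc_le_cfc hA hr) V
    _ = Vᴴ * V * cfc f Y := by
        rw [Matrix.mul_assoc, cfc_mul_eq_mul_cfc hX hY hXV f, ← Matrix.mul_assoc]
    _ = cfc f Y := by rw [hV, Matrix.one_mul]

open scoped Matrix.Norms.L2Operator in
theorem conjTranspose_mul_cfc_mul_le (hf : OpMonotone f) {A : Matrix ι ι ℂ} (hA : 0 ≤ A)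
    {V : Matrix ι κ ℂ} (hV : Vᴴ * V = 1) : Vᴴ * cfc f A * V ≤ cfc f (Vᴴ * A * V) := by
  refine ge_of_tendsto (hf.tendsto_cfc_smul (conjTranspose_mul_mul_nonneg hA V)) ?_
  filter_upwards [self_mem_nhdsWithin] with c hc
  exact hf.conjTranspose_mul_cfc_mul_le_cfc_smul hA hV hc

theorem concaveOn_cfc (hf : OpMonotone f) :
    ConcaveOn ℝ (Set.Ici (0 : Matrix ι ι ℂ)) (cfc f) := by
  refine ⟨convex_Ici 0, fun A hA B hB a b ha hb hab ↦ ?_⟩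
  let V : Matrix (ι ⊕ ι) ι ℂ := fromRows (√a • 1) (√b • 1)
  have hconj (X Y : Matrix ι ι ℂ) : Vᴴ * fromBlocks X 0 0 Y * V = a • X + b • Y := by
    simp [V, conjTranspose_fromRows_eq_fromCols_conjTranspose, Matrix.mul_assoc,
      fromBlocks_mul_fromRows, fromCols_mul_fromRows, smul_smul, Real.mul_self_sqrt, ha, hb]
  have hV : Vᴴ * V = 1 := by simpa [fromBlocks_one, ← add_smul, hab] using hconj 1 1
  have hjensen := hf.conjTranspose_mul_cfc_mul_le (fromBlocks_zero_zero_nonneg hA hB) hV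
  rwa [cfc_fromBlocks_zero_zero hA.posSemidef.isHermitian hB.posSemidef.isHermitian, hconj,
    hconj] at hjensen

theorem cfc_smul_le (hf : OpMonotone f) {A : Matrix ι ι ℂ} (hA : 0 ≤ A) {c : ℝ} (hc : 1 ≤ c) :
    cfc f (c • A) ≤ c • cfc f A := by
  have hc0 : 0 < c := zero_lt_one.trans_le hc
  have hc1 : 0 ≤ 1 - c⁻¹ := sub_nonneg.2 (inv_le_one_of_one_le₀ hc)
  rw [← inv_smul_le_iff_of_pos hc0]
  calc c⁻¹ • cfc f (c • A) ≤ c⁻¹ • cfc f (c • A) + (1 - c⁻¹) • cfc f 0 :=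
        le_add_of_nonneg_right (smul_nonneg hc1 (hf.cfc_nonneg le_rfl))
    _ ≤ cfc f (c⁻¹ • c • A + (1 - c⁻¹) • 0) :=
        hf.concaveOn_cfc.2 (smul_nonneg hc0.le hA) Set.self_mem_Ici (inv_nonneg.2 hc0.le) hc1
          (add_sub_cancel _ _)
    _ = cfc f A := by rw [inv_smul_smul₀ hc0.ne', smul_zero, add_zero]

end OpMonotone

section Means

variable {ι : Type} [Fintype ι] [DecidableEq ι] {A B : Matrix ι ι ℂ} {m M : ℝ}

lemma posDef_hmean (hA : A.PosDef) (hB : B.PosDef) : (hmean A B).PosDef :=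
  ((hA.inv.add hB.inv).smul (by positivity : (0 : ℝ) < 2⁻¹)).inv

lemma amean_le_amean {C D : Matrix ι ι ℂ} (hAC : A ≤ C) (hBD : B ≤ D) : amean A B ≤ amean C D :=
  smul_le_smul_of_nonneg_left (add_le_add hAC hBD) (by positivity)

lemma amean_self (A : Matrix ι ι ℂ) : amean A A = A := by
  rw [amean, ← two_smul ℝ A, inv_smul_smul₀ two_ne_zero]

theorem amean_le_smul_hmean (hm : 0 < m) (hM : 0 < M) (hmA : m • 1 ≤ A) (hAM : A ≤ M • 1)
    (hmB : m • 1 ≤ B) (hBM : B ≤ M • 1) :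
    amean A B ≤ ((M + m) ^ 2 / (4 * M * m)) • hmean A B := by
  have hH : (hmean A B).PosDef :=
    posDef_hmean (posDef_of_smul_one_le hm hmA) (posDef_of_smul_one_le hm hmB)
  have hinv : (hmean A B)⁻¹ = amean A⁻¹ B⁻¹ := nonsing_inv_nonsing_inv _ <|
    isUnit_nonsing_inv_det_iff.1 hH.det_pos.ne'.isUnit
  rw [← add_le_add_iff_left ((m * M) • (hmean A B)⁻¹)]
  calc (m * M) • (hmean A B)⁻¹ + amean A B
      = amean (A + (m * M) • A⁻¹) (B + (m * M) • B⁻¹) := by rw [hinv, amean, amean, amean]; module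
    _ ≤ amean ((m + M) • 1) ((m + M) • 1) :=
        amean_le_amean (add_smul_inv_le_smul_one hm hmA hAM) (add_smul_inv_le_smul_one hm hmB hBM)
    _ = (m + M) • 1 := amean_self _
    _ ≤ (m * M) • (hmean A B)⁻¹ + ((M + m) ^ 2 / (4 * M * m)) • hmean A B :=
        smul_one_le_smul_inv_add_smul hm hM hH

theorem OpMonotone.amean_cfc_sub_cfc_hmean_le {f : ℝ → ℝ} (hf : OpMonotone f) (hm : 0 < m)
    (hM : 0 < M) (hmA : m • 1 ≤ A) (hAM : A ≤ M • 1) (hmB : m • 1 ≤ B) (hBM : B ≤ M • 1) :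
    amean (cfc f A) (cfc f B) - cfc f (hmean A B) ≤ (((M - m) / (M + m)) ^ 2 * f M) • 1 := by
  have hA : A.PosDef := posDef_of_smul_one_le hm hmA
  have hB : B.PosDef := posDef_of_smul_one_le hm hmB
  have hAB : 0 ≤ amean A B := smul_nonneg (by positivity)
    (add_nonneg hA.posSemidef.nonneg hB.posSemidef.nonneg)
  set K := (M + m) ^ 2 / (4 * M * m) with hK
  have hK1 : 1 - K⁻¹ = ((M - m) / (M + m)) ^ 2 := by rw [hK]; field_simp; ring
  have hK0 : 0 < K := by positivity
  have hconcave : amean (cfc f A) (cfc f B) ≤ cfc f (amean A B) := by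
    simpa only [amean, smul_add] using hf.concaveOn_cfc.2 hA.posSemidef.nonneg
      hB.posSemidef.nonneg (by positivity : (0 : ℝ) ≤ 2⁻¹) (by positivity) (by norm_num)
  have hle : cfc f (amean A B) ≤ f M • 1 :=
    hf.cfc_le_smul_one hAB ((amean_le_amean hAM hBM).trans_eq (amean_self _))
  have hge : K⁻¹ • cfc f (amean A B) ≤ cfc f (hmean A B) := by
    rw [inv_smul_le_iff_of_pos hK0]
    exact (hf.cfc_le_cfc hAB (amean_le_smul_hmean hm hM hmA hAM hmB hBM)).trans
      (hf.cfc_smul_le (posDef_hmean hA hB).posSemidef.nonneg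
        ((inv_le_one₀ hK0).1 (sub_nonneg.1 (hK1 ▸ sq_nonneg _))))
  calc amean (cfc f A) (cfc f B) - cfc f (hmean A B)
      ≤ cfc f (amean A B) - K⁻¹ • cfc f (amean A B) := sub_le_sub hconcave hge
    _ = ((M - m) / (M + m)) ^ 2 • cfc f (amean A B) := by rw [← hK1, sub_smul, one_smul]
    _ ≤ ((M - m) / (M + m)) ^ 2 • f M • 1 := smul_le_smul_of_nonneg_left hle (sq_nonneg _)
    _ = (((M - m) / (M + m)) ^ 2 * f M) • 1 := smul_smul _ _ _

end Means

lemma sq_sub_div_add_le {m M : ℝ} (hm : 0 < m) (hM : 0 < M) :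
    ((M - m) / (M + m)) ^ 2 ≤ (M - m) ^ 2 / (4 * M * m) := by
  rw [div_pow]
  gcongr
  nlinarith [sq_nonneg (M - m)]

theorem gruss_monotone_general {ι : Type} [Fintype ι] [DecidableEq ι]
    {E : Type*} [AddCommGroup E] [PartialOrder E] [IsOrderedAddMonoid E] [Module ℝ E]
    (Φ : Matrix ι ι ℂ →ₗ[ℝ] E) (hΦ : ∀ X : Matrix ι ι ℂ, X.PosSemidef → 0 ≤ Φ X)
    (f : ℝ → ℝ) (hf : OpMonotone f)
    (A B : Matrix ι ι ℂ) (m M : ℝ) (hm : 0 < m) (hM : 0 < M)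
    (hA1 : LoewnerLE (m • (1 : Matrix ι ι ℂ)) A) (hA2 : LoewnerLE A (M • (1 : Matrix ι ι ℂ)))
    (hB1 : LoewnerLE (m • (1 : Matrix ι ι ℂ)) B) (hB2 : LoewnerLE B (M • (1 : Matrix ι ι ℂ))) :
    (2 : ℝ)⁻¹ • (Φ (cfc f A) + Φ (cfc f B)) - Φ (cfc f (hmean A B)) ≤
      (((M - m) / (M + m)) ^ 2 * f M) • Φ 1 := by
  have h := hΦ _ (hf.amean_cfc_sub_cfc_hmean_le hm hM hA1 hA2 hB1 hB2)
  rw [map_sub, sub_nonneg] at h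
  simpa only [amean, map_sub, map_smul, map_add] using h

theorem gruss_monotone {ι κ : Type} [Fintype ι] [DecidableEq ι] [Fintype κ] [DecidableEq κ]
    (Φ : Matrix ι ι ℂ →ₗ[ℂ] Matrix κ κ ℂ)
    (hΦ : ∀ X : Matrix ι ι ℂ, X.PosSemidef → (Φ X).PosSemidef) (hΦ1 : Φ 1 = 1)
    (f : ℝ → ℝ) (hf : OpMonotone f)
    (A B : Matrix ι ι ℂ) (m M : ℝ) (hm : 0 < m) (hmM : m < M)
    (hA1 : LoewnerLE (m • (1 : Matrix ι ι ℂ)) A) (hA2 : LoewnerLE A (M • (1 : Matrix ι ι ℂ)))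
    (hB1 : LoewnerLE (m • (1 : Matrix ι ι ℂ)) B) (hB2 : LoewnerLE B (M • (1 : Matrix ι ι ℂ))) :
    LoewnerLE ((2 : ℝ)⁻¹ • (Φ (cfc f A) + Φ (cfc f B)) - Φ (cfc f (hmean A B)))
      ((((M - m) ^ 2 / (4 * M * m)) * f M) • (1 : Matrix κ κ ℂ)) := by
  have hM : 0 < M := hm.trans hmM
  have h := gruss_monotone_general (Φ.restrictScalars ℝ) (fun X hX ↦ (hΦ X hX).nonneg) f hf A B m M
    hm hM hA1 hA2 hB1 hB2
  simp only [LinearMap.restrictScalars_apply, hΦ1] at h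
  exact h.trans <| smul_le_smul_of_nonneg_right
    (mul_le_mul_of_nonneg_right (sq_sub_div_add_le hm hM) (hf.2.1 M hM.le)) zero_le_one
end

section
/- Let A and B be positive definite complex matrices such that s·A ≤ B ≤ t·A for some scalars 0 < s ≤ t. Then (√(st)·A + B)/2 ≤ ((√s+√t)/2)·(A ♯ B). -/
open Matrix ComplexOrder

/-!
For real `0 ≤ s ≤ x ≤ t`, the inequality `√(s * t) + x ≤ (√s + √t) * √x` is the expansion of
`0 ≤ (√x - √s) * (√t - √x)`. The functional calculus transfers it to `a^(-1/2) b a^(-1/2)`, which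
lies between the scalars `s` and `t`, and conjugating by `a^(1/2)` gives the result.
-/

open CFC
open scoped Ring MatrixOrder

theorem sqrt_mul_add_le_mul_sqrt {s t x : ℝ} (hs : 0 ≤ s) (hsx : s ≤ x) (hxt : x ≤ t) :
    √(s * t) + x ≤ (√s + √t) * √x := by
  have h_prod : 0 ≤ (√x - √s) * (√t - √x) :=
    mul_nonneg (sub_nonneg.2 (Real.sqrt_le_sqrt hsx)) (sub_nonneg.2 (Real.sqrt_le_sqrt hxt))
  rw [Real.sqrt_mul hs]
  linarith [Real.mul_self_sqrt (hs.trans hsx)]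

section StarOrderedRing

variable {R : Type*} [PartialOrder R] [Ring R] [StarRing R] [TopologicalSpace R]
  [StarOrderedRing R] [Algebra ℝ R] [ContinuousFunctionalCalculus ℝ R IsSelfAdjoint]
  [NonnegSpectrumClass ℝ R] [IsSemitopologicalRing R] [T2Space R]

theorem sqrt_eq_cfc_real_sqrt {a : R} (ha : 0 ≤ a) : CFC.sqrt a = cfc Real.sqrt a := by
  rw [CFC.sqrt_eq_real_sqrt a, cfcₙ_eq_cfc]

/-- The geometric mean `a ♯ b = a^(1/2) (a^(-1/2) b a^(-1/2))^(1/2) a^(1/2)` of a strictly positive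
`a` and a nonnegative `b` in a star-ordered algebra, extending `gmean` beyond matrices. -/
noncomputable def geometricMean (a b : R) : R :=
  conjSqrt a (CFC.sqrt (conjSqrt a⁻¹ʳ b))

variable [StarModule ℝ R]

theorem algebraMap_sqrt_mul_add_le_smul_sqrt {a : R} {s t : ℝ} (hs : 0 ≤ s)
    (hsa : algebraMap ℝ R s ≤ a) (hat : a ≤ algebraMap ℝ R t) :
    algebraMap ℝ R √(s * t) + a ≤ (√s + √t) • CFC.sqrt a := by
  have ha : 0 ≤ a := (algebraMap_nonneg R hs).trans hsa
  have h_selfAdjoint : IsSelfAdjoint a := .of_nonneg ha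
  have hs_spec := (algebraMap_le_iff_le_spectrum h_selfAdjoint).1 hsa
  have ht_spec := (le_algebraMap_iff_spectrum_le h_selfAdjoint).1 hat
  calc algebraMap ℝ R √(s * t) + a = cfc (fun x : ℝ ↦ √(s * t) + x) a := by
        rw [cfc_const_add _ _ a, cfc_id' ℝ a]
    _ ≤ cfc (fun x : ℝ ↦ (√s + √t) * √x) a :=
        cfc_mono fun x hx ↦ sqrt_mul_add_le_mul_sqrt hs (hs_spec x hx) (ht_spec x hx)
    _ = (√s + √t) • CFC.sqrt a := by
        rw [cfc_const_mul _ _ a, sqrt_eq_cfc_real_sqrt ha]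

theorem sqrt_st_arith_le_geom_general {a b : R} (ha : IsStrictlyPositive a) {s t : ℝ} (hs : 0 ≤ s)
    (hsa : s • a ≤ b) (hta : b ≤ t • a) :
    (2 : ℝ)⁻¹ • (√(s * t) • a + b) ≤ ((√s + √t) / 2) • geometricMean a b := by
  have h_conj (r : ℝ) : conjSqrt a⁻¹ʳ (r • a) = algebraMap ℝ R r := by
    rw [map_smul, conjSqrt_ringInverse_self a, Algebra.algebraMap_eq_smul_one]
  have h_lower : algebraMap ℝ R s ≤ conjSqrt a⁻¹ʳ b := h_conj s ▸ conjSqrt_le_conjSqrt hsa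
  have h_upper : conjSqrt a⁻¹ʳ b ≤ algebraMap ℝ R t := h_conj t ▸ conjSqrt_le_conjSqrt hta
  have h_sum : √(s * t) • a + b ≤ (√s + √t) • geometricMean a b := calc
    √(s * t) • a + b = conjSqrt a (algebraMap ℝ R √(s * t) + conjSqrt a⁻¹ʳ b) := by
        rw [map_add, conjSqrt_conjSqrt_ringInverse a b, Algebra.algebraMap_eq_smul_one, map_smul,
          conjSqrt_one a]
    _ ≤ conjSqrt a ((√s + √t) • CFC.sqrt (conjSqrt a⁻¹ʳ b)) :=
        conjSqrt_le_conjSqrt (algebraMap_sqrt_mul_add_le_smul_sqrt hs h_lower h_upper)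
    _ = (√s + √t) • geometricMean a b := map_smul ..
  rw [div_eq_inv_mul, mul_smul]
  exact smul_le_smul_of_nonneg_left h_sum (by norm_num)

end StarOrderedRing

theorem gmean_eq_geometricMean {n : Type} [Fintype n] [DecidableEq n] {A B : Matrix n n ℂ}
    (hA : A.PosDef) (hB : B.PosSemidef) : gmean A B = geometricMean A B := by
  have hA_pos : IsStrictlyPositive A := isStrictlyPositive_iff_posDef.2 hA
  have h_msqrt {X : Matrix n n ℂ} (hX : 0 ≤ X) : msqrt X = CFC.sqrt X :=
    (sqrt_eq_cfc_real_sqrt hX).symm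
  have h_conj : (msqrt A)⁻¹ * B * (msqrt A)⁻¹ = conjSqrt A⁻¹ʳ B := by
    rw [conjSqrt_apply, sqrt_ringInverse, h_msqrt hA_pos.nonneg, nonsing_inv_eq_ringInverse]
  have h_nonneg : 0 ≤ conjSqrt A⁻¹ʳ B := by
    simpa only [map_zero] using conjSqrt_le_conjSqrt (c := A⁻¹ʳ) hB.nonneg
  rw [gmean, h_conj, h_msqrt h_nonneg, h_msqrt hA_pos.nonneg, geometricMean,
    conjSqrt_apply (c := A)]

theorem sqrt_st_arith_le_geom {n : Type} [Fintype n] [DecidableEq n]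
    (A B : Matrix n n ℂ) (hA : A.PosDef) (hB : B.PosDef)
    (s t : ℝ) (hs : 0 < s) (hst : s ≤ t)
    (hsA : LoewnerLE (s • A) B) (htA : LoewnerLE B (t • A)) :
    LoewnerLE ((2 : ℝ)⁻¹ • (Real.sqrt (s * t) • A + B))
      (((Real.sqrt s + Real.sqrt t) / 2) • gmean A B) := by
  rw [gmean_eq_geometricMean hA hB.posSemidef]
  exact sqrt_st_arith_le_geom_general (isStrictlyPositive_iff_posDef.2 hA) hs.le hsA htA
end
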